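/- arXiv:2406.06068 — 2 statements merged into one kernel-verified Lean document; each statement's English description precedes it below -/
import Mathlib

section
/- Fix an integer n ≥ 1 and real numbers α₁, α₂, α₃ with α₁ > 0, α₂ > α₃ > 0, and α₂² − α₃² − 2α₁ ≥ 0. Let A be the 2n×2n block-circulant complex matrix whose (i, j)-th 2×2 block equals A₁ = [[0, −1], [α₁, −α₂]] if j = i, equals A₂ = [[0, 1], [0, α₃]] if j = i − 1 (mod n), and is zero otherwise. Then every eigenvalue λ of A satisfies Re(λ) ≤ 0, and every nonzero eigenvalue λ of A satisfies Re(λ) < 0. -/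
/-!
If satellites interact through a coupling matrix `W`, the system matrix is `1 ⊗ A₁ + W ⊗ A₂`.
It commutes with `W ⊗ 1`, so each of its eigenvalues `lam` has an eigenvector that is also an
eigenvector of `W ⊗ 1`, say for `μ`. Then `lam` is an eigenvalue of the `2 × 2` matrix
`A₁ + μ A₂`, that is, `lam² + α₂ lam + α₁ = μ (α₁ + α₃ lam)`. The stability condition makes the
left-hand polynomial strictly larger in modulus than `α₁ + α₃ lam` at every `lam ≠ 0` of the closed
right half-plane, which is incompatible with `‖μ‖ ≤ 1`. For the ring, each row of `W` has at most
one nonzero entry, a `1` off the diagonal, so Gershgorin's theorem gives `‖μ‖ ≤ 1`.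
-/

open Matrix Kronecker

theorem exists_common_hasEigenvector {K V : Type*} [Field K] [IsAlgClosed K] [AddCommGroup V]
    [Module K V] [FiniteDimensional K V] {f g : Module.End K V} (hfg : Commute f g) {a : K}
    (ha : f.HasEigenvalue a) : ∃ b v, f.HasEigenvector a v ∧ g.HasEigenvector b v := by
  have g_mapsTo : ∀ v ∈ f.eigenspace a, g v ∈ f.eigenspace a :=
    Module.End.mapsTo_genEigenspace_of_comm hfg a 1
  have : Nontrivial (f.eigenspace a) := Submodule.nontrivial_iff_ne_bot.mpr ha
  obtain ⟨b, hb⟩ := Module.End.exists_eigenvalue (g.restrict g_mapsTo)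
  obtain ⟨v, hv, hv_ne⟩ := hb.exists_hasEigenvector
  have hv_ne' : (v : V) ≠ 0 := Submodule.coe_eq_zero.not.mpr hv_ne
  exact ⟨b, v, ⟨v.2, hv_ne'⟩,
    Module.End.eigenspace_restrict_le_eigenspace g g_mapsTo b ⟨v, hv, rfl⟩, hv_ne'⟩

section Kronecker

variable {ι κ : Type*} [Fintype ι] [DecidableEq ι] [Fintype κ]

theorem hasEigenvalue_toLin'_iff_mem_spectrum {K : Type*} [Field K] {M : Matrix ι ι K} {a : K} :
    Module.End.HasEigenvalue (toLin' M) a ↔ a ∈ spectrum K M := by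
  rw [Module.End.hasEigenvalue_iff_mem_spectrum, spectrum_toLin']

theorem mem_spectrum_of_mulVec_eq_smul {K : Type*} [Field K] {M : Matrix ι ι K} {a : K}
    {v : ι → K} (hv : M *ᵥ v = a • v) (hv_ne : v ≠ 0) : a ∈ spectrum K M :=
  hasEigenvalue_toLin'_iff_mem_spectrum.mp <|
    Module.End.hasEigenvalue_of_hasEigenvector
      ⟨Module.End.mem_eigenspace_iff.mpr (toLin'_apply M v ▸ hv), hv_ne⟩

theorem one_kronecker_mulVec_apply {R : Type*} [NonAssocSemiring R] (M : Matrix κ κ R)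
    (v : ι × κ → R) (i : ι) (a : κ) :
    (((1 : Matrix ι ι R) ⊗ₖ M) *ᵥ v) (i, a) = (M *ᵥ fun b => v (i, b)) a := by
  simp [mulVec, dotProduct, Fintype.sum_prod_type_right, one_apply]

theorem kronecker_one_mulVec_apply {R : Type*} [NonAssocSemiring R] (M : Matrix κ κ R)
    (v : κ × ι → R) (a : κ) (i : ι) :
    ((M ⊗ₖ (1 : Matrix ι ι R)) *ᵥ v) (a, i) = (M *ᵥ fun b => v (b, i)) a := by
  simp [mulVec, dotProduct, Fintype.sum_prod_type, one_apply]

theorem commute_one_kronecker_add_kronecker {R : Type*} [CommSemiring R] [DecidableEq κ]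
    (W : Matrix ι ι R) (B C : Matrix κ κ R) :
    Commute (1 ⊗ₖ B + W ⊗ₖ C) (W ⊗ₖ 1) := by
  simp only [Commute, SemiconjBy, add_mul, mul_add, ← mul_kronecker_mul, Matrix.one_mul,
    Matrix.mul_one]

theorem exists_mem_spectrum_add_smul_of_mem_spectrum_kronecker {K : Type*} [Field K]
    [IsAlgClosed K] [DecidableEq κ] {W : Matrix ι ι K} {B C : Matrix κ κ K} {a : K}
    (ha : a ∈ spectrum K (1 ⊗ₖ B + W ⊗ₖ C)) :
    ∃ b ∈ spectrum K W, a ∈ spectrum K (B + b • C) := by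
  have hcomm := (commute_one_kronecker_add_kronecker W B C).map toLinAlgEquiv'
  obtain ⟨b, v, ⟨hv, hv_ne⟩, ⟨hWv, -⟩⟩ :=
    exists_common_hasEigenvector hcomm (hasEigenvalue_toLin'_iff_mem_spectrum.mpr ha)
  replace hv : (1 ⊗ₖ B + W ⊗ₖ C) *ᵥ v = a • v := Module.End.mem_eigenspace_iff.mp hv
  replace hWv : (W ⊗ₖ 1) *ᵥ v = b • v := Module.End.mem_eigenspace_iff.mp hWv
  have hBCv : (1 ⊗ₖ (B + b • C)) *ᵥ v = a • v := by
    have hWC : W ⊗ₖ C = (1 ⊗ₖ C) * (W ⊗ₖ 1) := by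
      rw [← mul_kronecker_mul, Matrix.one_mul, Matrix.mul_one]
    rw [← hv, hWC, add_mulVec, ← mulVec_mulVec, hWv, kronecker_add, kronecker_smul, add_mulVec,
      smul_mulVec, mulVec_smul]
  obtain ⟨⟨i, k⟩, hik⟩ := Function.ne_iff.mp hv_ne
  refine ⟨b, mem_spectrum_of_mulVec_eq_smul (v := fun j => v (j, k)) ?_ ?_,
    mem_spectrum_of_mulVec_eq_smul (v := fun l => v (i, l)) ?_ ?_⟩
  · ext j
    rw [← kronecker_one_mulVec_apply, hWv]
    rfl
  · exact Function.ne_iff.mpr ⟨i, hik⟩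
  · ext l
    rw [← one_kronecker_mulVec_apply, hBCv]
    rfl
  · exact Function.ne_iff.mpr ⟨k, hik⟩

end Kronecker

section Coupling

variable {ι : Type*} [DecidableEq ι]

/-- The coupling matrix of a network in which `i` reacts to `σ i`. A fixed point of `σ` reacts to
nobody, so the diagonal vanishes. -/
def couplingMatrix (R : Type*) [Zero R] [One R] (σ : ι → ι) : Matrix ι ι R :=
  of fun i j => if j = i then 0 else if j = σ i then 1 else 0

theorem eq_one_kronecker_add_couplingMatrix_kronecker {κ R : Type*} [NonAssocSemiring R]
    {σ : ι → ι} {B C : Matrix κ κ R} {M : Matrix (ι × κ) (ι × κ) R}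
    (hM : ∀ i j a b, M (i, a) (j, b) = if j = i then B a b else if j = σ i then C a b else 0) :
    M = 1 ⊗ₖ B + couplingMatrix R σ ⊗ₖ C := by
  ext ⟨i, a⟩ ⟨j, b⟩
  rw [hM]
  by_cases hji : j = i
  · simp [couplingMatrix, hji]
  · simp [couplingMatrix, hji, one_apply_ne' hji]

theorem norm_le_one_of_mem_spectrum_couplingMatrix {K : Type*} [NormedField K] [Fintype ι]
    {σ : ι → ι} {μ : K} (hμ : μ ∈ spectrum K (couplingMatrix K σ)) : ‖μ‖ ≤ 1 := by
  obtain ⟨i, hi⟩ := eigenvalue_mem_ball (hasEigenvalue_toLin'_iff_mem_spectrum.mpr hμ)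
  have diag_eq_zero : couplingMatrix K σ i i = 0 := if_pos rfl
  rw [diag_eq_zero, mem_closedBall_zero_iff] at hi
  calc ‖μ‖
      ≤ ∑ j ∈ Finset.univ.erase i, ‖couplingMatrix K σ i j‖ := hi
    _ ≤ ∑ j, ‖couplingMatrix K σ i j‖ :=
        Finset.sum_le_univ_sum_of_nonneg fun _ => norm_nonneg _
    _ ≤ ∑ j, if j = σ i then 1 else 0 := by
        gcongr with j
        simp only [couplingMatrix, of_apply]
        split_ifs <;> simp
    _ = 1 := Fintype.sum_ite_eq' (σ i) fun _ => 1

end Coupling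

/-- The response of a satellite's spacing and velocity to its own state: the block `A₁`. -/
def selfBlock (α₁ α₂ : ℝ) : Matrix (Fin 2) (Fin 2) ℂ :=
  !![0, -1; (α₁ : ℂ), -(α₂ : ℂ)]

/-- The response of a satellite's spacing and velocity to its neighbor's state: the block `A₂`. -/
def neighborBlock (α₃ : ℝ) : Matrix (Fin 2) (Fin 2) ℂ :=
  !![0, 1; 0, (α₃ : ℂ)]

section Block

variable {α₁ α₂ α₃ : ℝ}

theorem eq_of_mem_spectrum_selfBlock_add_smul_neighborBlock {μ lam : ℂ}
    (h : lam ∈ spectrum ℂ (selfBlock α₁ α₂ + μ • neighborBlock α₃)) :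
    lam ^ 2 + α₂ * lam + α₁ = μ * (α₁ + α₃ * lam) := by
  have block_eq :
      selfBlock α₁ α₂ + μ • neighborBlock α₃ = !![0, -1 + μ; (α₁ : ℂ), -α₂ + μ * α₃] := by
    simp [selfBlock, neighborBlock]
  rw [block_eq, mem_spectrum_iff_isRoot_charpoly, charpoly_fin_two, trace_fin_two_of,
    det_fin_two_of] at h
  simp only [Polynomial.IsRoot.def, Polynomial.eval_add, Polynomial.eval_sub, Polynomial.eval_pow,
    Polynomial.eval_mul, Polynomial.eval_X, Polynomial.eval_C] at h
  linear_combination h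

theorem norm_add_mul_lt_norm_sq_add_mul_add (h₁ : 0 ≤ α₁) (h₂ : 0 ≤ α₂)
    (hstab : 0 ≤ α₂ ^ 2 - α₃ ^ 2 - 2 * α₁) {lam : ℂ} (hlam : lam ≠ 0) (hre : 0 ≤ lam.re) :
    ‖(α₁ + α₃ * lam : ℂ)‖ < ‖lam ^ 2 + α₂ * lam + α₁‖ := by
  have h₂₃ : 0 ≤ α₂ - α₃ :=
    sub_nonneg.mpr (le_of_abs_le (abs_le_of_sq_le_sq (by linarith) h₂))
  have normSq_pos : 0 < Complex.normSq lam := Complex.normSq_pos.mpr hlam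
  have normSq_sub :
      Complex.normSq (lam ^ 2 + α₂ * lam + α₁) - Complex.normSq (α₁ + α₃ * lam) =
        Complex.normSq lam ^ 2 + 2 * α₂ * lam.re * Complex.normSq lam +
          Complex.normSq lam * (α₂ ^ 2 - α₃ ^ 2 - 2 * α₁) + 4 * α₁ * lam.re ^ 2 +
          2 * α₁ * (α₂ - α₃) * lam.re := by
    simp only [pow_two, Complex.normSq_apply, Complex.add_re, Complex.add_im, Complex.mul_re,
      Complex.mul_im, Complex.ofReal_re, Complex.ofReal_im]
    ring
  have normSq_sub_pos :
      0 < Complex.normSq (lam ^ 2 + α₂ * lam + α₁) - Complex.normSq (α₁ + α₃ * lam) := by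
    rw [normSq_sub]
    positivity
  rw [← sq_lt_sq₀ (norm_nonneg _) (norm_nonneg _), ← Complex.normSq_eq_norm_sq,
    ← Complex.normSq_eq_norm_sq]
  exact sub_pos.mp normSq_sub_pos

theorem re_neg_of_mem_spectrum_selfBlock_add_smul_neighborBlock (h₁ : 0 ≤ α₁) (h₂ : 0 ≤ α₂)
    (hstab : 0 ≤ α₂ ^ 2 - α₃ ^ 2 - 2 * α₁) {μ lam : ℂ} (hμ : ‖μ‖ ≤ 1)
    (h : lam ∈ spectrum ℂ (selfBlock α₁ α₂ + μ • neighborBlock α₃)) (hlam : lam ≠ 0) :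
    lam.re < 0 := by
  by_contra! hre
  refine (norm_add_mul_lt_norm_sq_add_mul_add h₁ h₂ hstab hlam hre).not_ge ?_
  calc ‖lam ^ 2 + α₂ * lam + α₁‖
      = ‖μ‖ * ‖(α₁ + α₃ * lam : ℂ)‖ := by
        rw [eq_of_mem_spectrum_selfBlock_add_smul_neighborBlock h, norm_mul]
    _ ≤ ‖(α₁ + α₃ * lam : ℂ)‖ := mul_le_of_le_one_left (norm_nonneg _) hμ

end Block

theorem stmt_10_general {ι : Type*} [Fintype ι] [DecidableEq ι] (α₁ α₂ α₃ : ℝ)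
    (h₁ : 0 ≤ α₁) (h₂ : 0 ≤ α₂) (hstab : 0 ≤ α₂ ^ 2 - α₃ ^ 2 - 2 * α₁) {W : Matrix ι ι ℂ}
    (hW : ∀ μ ∈ spectrum ℂ W, ‖μ‖ ≤ 1) :
    ∀ lam ∈ spectrum ℂ (1 ⊗ₖ selfBlock α₁ α₂ + W ⊗ₖ neighborBlock α₃),
      lam.re ≤ 0 ∧ (lam ≠ 0 → lam.re < 0) := by
  intro lam hlam
  obtain ⟨μ, hμ, hblock⟩ := exists_mem_spectrum_add_smul_of_mem_spectrum_kronecker hlam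
  have re_neg : lam ≠ 0 → lam.re < 0 :=
    re_neg_of_mem_spectrum_selfBlock_add_smul_neighborBlock h₁ h₂ hstab (hW μ hμ) hblock
  refine ⟨?_, re_neg⟩
  rcases eq_or_ne lam 0 with rfl | hne
  · exact Complex.zero_re.le
  · exact (re_neg hne).le

/-- Matrix form of the sufficiency direction of Proposition 1: under the stability
condition, every eigenvalue of the block-circulant system matrix has nonpositive real
part, and every nonzero eigenvalue has negative real part. -/
theorem stmt_10 (n : ℕ) [NeZero n] (α₁ α₂ α₃ : ℝ)
    (h₁ : 0 < α₁) (h₂₃ : α₃ < α₂) (h₃ : 0 < α₃)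
    (hstab : α₂ ^ 2 - α₃ ^ 2 - 2 * α₁ ≥ 0)
    (A₁ A₂ : Matrix (Fin 2) (Fin 2) ℂ)
    (hA₁ : A₁ = !![0, -1; (α₁ : ℂ), -(α₂ : ℂ)])
    (hA₂ : A₂ = !![0, 1; 0, (α₃ : ℂ)])
    (A : Matrix (ZMod n × Fin 2) (ZMod n × Fin 2) ℂ)
    (hA : ∀ (i j : ZMod n) (a b : Fin 2),
      A (i, a) (j, b) = if j = i then A₁ a b else if j = i - 1 then A₂ a b else 0) :
    ∀ lam ∈ spectrum ℂ A, lam.re ≤ 0 ∧ (lam ≠ 0 → lam.re < 0) := by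
  subst hA₁ hA₂
  rw [eq_one_kronecker_add_couplingMatrix_kronecker (σ := (· - 1)) hA]
  exact stmt_10_general α₁ α₂ α₃ h₁.le (h₃.trans h₂₃).le hstab
    fun _ => norm_le_one_of_mem_spectrum_couplingMatrix
end

section
/- Fix an integer n ≥ 1 and real numbers α₁ > 0 and α₃ > 0. Let B be the 2n×2n block-circulant complex matrix indexed by pairs (i, a) with i ∈ ℤ/nℤ and a ∈ {1,2}, whose (i, j)-th 2×2 block equals B₀ = [[0, −1], [α₁, −2α₃]] if j = i, equals B₋ = [[0, 1], [0, α₃]] if j = i − 1 (mod n), equals B₊ = [[0, 0], [−α₁, α₃]] if j = i + 1 (mod n), and is zero otherwise. Then every eigenvalue λ of B satisfies Re(λ) ≤ 0, and every nonzero eigenvalue λ of B satisfies Re(λ) < 0. -/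
/-!
An eigenvector of `B` splits into a position part `x` and a velocity part `w`. Eliminating `x`
leaves a damped oscillator, `λ² w + λ α₃ K w + α₁ M w = 0`, where the stiffness `M` and the damping
`K` satisfy `0 ≤ M ≤ K`. Pairing with `w` yields a scalar quadratic in `λ` with real coefficients,
whose damping coefficient can vanish only if the stiffness coefficient does, and so every nonzero
`λ` lies in the open left half-plane.

Let `S` be the shift to the predecessor: `i ↦ i - 1` on the ring, or `i ↦ i - g` on a finite group.
If `g + g ≠ 0`, the two neighbours of a point are distinct from it and from each other, and
`M = K = 2 - S - Sᴴ = (1 - S)ᴴ (1 - S)`. If `g + g = 0`, as in rings of one or two satellites, the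
blocks of `B` overlap and `K = M + 1`, where `M = 1` for `g = 0` and `M = 1 - S` otherwise.
-/

open Matrix
open scoped ComplexOrder ComplexConjugate

section Oscillator

variable {m ι : Type*}

lemma re_neg_of_quadratic_eq_zero {a p q : ℝ} (ha : 0 < a) (hp : 0 ≤ p) (hq : 0 ≤ q)
    (hpq : p = 0 → q = 0) {z : ℂ} (hz : z ≠ 0) (h : z ^ 2 * a + z * p + q = 0) : z.re < 0 := by
  have hp_pos : 0 < p := by
    refine hp.lt_of_ne' fun hp0 ↦ ?_
    simp [hp0, hpq hp0, hz, ha.ne'] at h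
  have h_conj : (a * Complex.normSq z + q) * z.re = -(p * Complex.normSq z) := by
    have h_mul : ((a * Complex.normSq z : ℝ) : ℂ) * z + (p * Complex.normSq z : ℝ)
        + q * conj z = 0 := by
      push_cast
      rw [Complex.normSq_eq_conj_mul_self]
      linear_combination conj z * h
    have h_re := congrArg Complex.re h_mul
    simp only [Complex.add_re, Complex.re_ofReal_mul, Complex.ofReal_re, Complex.conj_re,
      Complex.zero_re] at h_re
    linear_combination h_re
  have hz_pos : 0 < Complex.normSq z := Complex.normSq_pos.mpr hz
  have h_coeff : 0 < a * Complex.normSq z + q := by positivity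
  exact (pos_iff_neg_of_mul_neg (h_conj ▸ neg_neg_of_pos (mul_pos hp_pos hz_pos))).mp h_coeff

lemma mulVec_eq_zero_of_posSemidef_sub {𝕜 : Type*} [RCLike 𝕜] [Fintype ι] {K M : Matrix ι ι 𝕜}
    (hM : M.PosSemidef) (hKM : (K - M).PosSemidef) {x : ι → 𝕜} (hx : K *ᵥ x = 0) :
    M *ᵥ x = 0 := by
  have h_sub := hKM.dotProduct_mulVec_nonneg x
  rw [sub_mulVec, hx, zero_sub, dotProduct_neg, neg_nonneg] at h_sub
  exact (hM.dotProduct_mulVec_zero_iff x).mp (h_sub.antisymm (hM.dotProduct_mulVec_nonneg x))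

lemma re_neg_of_quadratic_pencil_mulVec_eq_zero [Fintype ι] {A K M : Matrix ι ι ℂ}
    (hA : A.PosDef) (hK : K.PosSemidef) (hM : M.PosSemidef)
    (hKM : ∀ x, K *ᵥ x = 0 → M *ᵥ x = 0) {z : ℂ} (hz : z ≠ 0) {w : ι → ℂ} (hw : w ≠ 0)
    (h : (z ^ 2 • A + z • K + M) *ᵥ w = 0) : z.re < 0 := by
  obtain ⟨a, ha, haw⟩ := RCLike.pos_iff_exists_ofReal.mp (hA.dotProduct_mulVec_pos hw)
  obtain ⟨p, hp, hpw⟩ := RCLike.nonneg_iff_exists_ofReal.mp (hK.dotProduct_mulVec_nonneg w)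
  obtain ⟨q, hq, hqw⟩ := RCLike.nonneg_iff_exists_ofReal.mp (hM.dotProduct_mulVec_nonneg w)
  refine re_neg_of_quadratic_eq_zero ha hp hq (fun hp0 ↦ ?_) hz ?_
  · have hKw : K *ᵥ w = 0 := (hK.dotProduct_mulVec_zero_iff w).mp (by simp [← hpw, hp0])
    simpa [hKM w hKw] using hqw
  · have h_pair := congrArg (star w ⬝ᵥ ·) h
    simpa [add_mulVec, smul_mulVec, ← haw, ← hpw, ← hqw] using h_pair

lemma exists_mulVec_eq_smul_of_mem_spectrum {𝕜 : Type*} [Field 𝕜] [Fintype ι] [DecidableEq ι]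
    {A : Matrix ι ι 𝕜} {z : 𝕜} (hz : z ∈ spectrum 𝕜 A) : ∃ v ≠ 0, A *ᵥ v = z • v := by
  rw [← spectrum_toLin', ← Module.End.hasEigenvalue_iff_mem_spectrum] at hz
  obtain ⟨v, hv⟩ := hz.exists_hasEigenvector
  exact ⟨v, hv.2, by simpa using hv.apply_eq_smul⟩

lemma re_neg_of_mem_spectrum_fromBlocks [Fintype m] [DecidableEq m] [Fintype ι] [DecidableEq ι]
    {P : Matrix m ι ℂ} {Q : Matrix ι m ℂ} {K : Matrix ι ι ℂ}
    (hK : K.PosSemidef) (hQP : (-(Q * P)).PosSemidef)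
    (hker : ∀ x, K *ᵥ x = 0 → (-(Q * P)) *ᵥ x = 0) {z : ℂ} (hz : z ≠ 0)
    (hspec : z ∈ spectrum ℂ (fromBlocks 0 P Q (-K))) : z.re < 0 := by
  obtain ⟨v, hv, hzv⟩ := exists_mulVec_eq_smul_of_mem_spectrum hspec
  obtain ⟨x, w, rfl⟩ : ∃ x w, v = Sum.elim x w := ⟨_, _, (Sum.elim_comp_inl_inr v).symm⟩
  have h_position : P *ᵥ w = z • x := by
    funext i
    simpa [fromBlocks_mulVec] using congrFun hzv (Sum.inl i)
  have h_velocity : Q *ᵥ x - K *ᵥ w = z • w := by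
    funext i
    simpa [fromBlocks_mulVec, neg_mulVec, sub_eq_add_neg] using congrFun hzv (Sum.inr i)
  have hw : w ≠ 0 := by
    rintro rfl
    have hx : x = 0 := by simpa [hz] using h_position.symm
    exact hv (by simp [hx])
  refine re_neg_of_quadratic_pencil_mulVec_eq_zero PosDef.one hK hQP hker hz hw ?_
  calc (z ^ 2 • (1 : Matrix ι ι ℂ) + z • K + -(Q * P)) *ᵥ w
      = z • (z • w + K *ᵥ w) - Q *ᵥ (P *ᵥ w) := by
        simp [add_mulVec, neg_mulVec, smul_mulVec, mulVec_mulVec, smul_smul, sq, sub_eq_add_neg]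
    _ = 0 := by rw [← h_velocity, h_position, mulVec_smul]; simp

end Oscillator

section Ring

variable {G : Type*} [AddGroup G] [DecidableEq G]

/-- The matrix of the shift `i ↦ i - g`: it sends a vector `x` to `i ↦ x (i - g)`. On the ring
`ZMod n` with `g = 1`, it reads off the value at the predecessor. -/
def shiftMatrix (g : G) : Matrix G G ℂ :=
  Equiv.Perm.permMatrix ℂ (Equiv.subRight g)

/-- The three-point stencil with weight `a` at `i`, `b` at `i - g` and `c` at `i + g`. Where these
positions coincide, the first weight in this order is used and the weights are not added up; this
is the convention for the blocks of the system matrix on rings with fewer than three points. -/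
def stencil (g : G) (a b c : ℂ) : Matrix G G ℂ :=
  of fun i j ↦ if j = i then a else if j = i - g then b else if j = i + g then c else 0

lemma shiftMatrix_apply (g i j : G) : shiftMatrix g i j = if j = i - g then 1 else 0 := by
  simp [shiftMatrix, PEquiv.toMatrix_apply, eq_comm]

lemma conjTranspose_shiftMatrix (g : G) : (shiftMatrix g)ᴴ = shiftMatrix (-g) := by
  ext i j
  simp [shiftMatrix_apply, eq_sub_iff_add_eq, eq_comm, apply_ite]

lemma stencil_of_eq_zero {g : G} (hg : g = 0) (a b c : ℂ) : stencil g a b c = a • 1 := by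
  ext i j
  by_cases hij : j = i
  · simp [stencil, hij]
  · simp [stencil, hg, hij, Ne.symm hij]

lemma stencil_of_add_self_eq_zero {g : G} (hg : g ≠ 0) (hgg : g + g = 0) (a b c : ℂ) :
    stencil g a b c = a • 1 + b • shiftMatrix g := by
  have h_neg : -g = g := neg_eq_of_add_eq_zero_left hgg
  ext i j
  by_cases hij : j = i
  · simp [stencil, shiftMatrix_apply, hij, eq_sub_iff_add_eq, hg]
  · by_cases hpred : j = i - g
    · simp [stencil, shiftMatrix_apply, hij, Ne.symm hij, ← hpred]
    · have hsucc : j ≠ i + g := by rwa [sub_eq_add_neg, h_neg] at hpred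
      simp [stencil, shiftMatrix_apply, hij, Ne.symm hij, hpred, hsucc]

lemma stencil_of_add_self_ne_zero {g : G} (hgg : g + g ≠ 0) (a b c : ℂ) :
    stencil g a b c = a • 1 + b • shiftMatrix g + c • (shiftMatrix g)ᴴ := by
  have hg : g ≠ 0 := by
    rintro rfl
    exact hgg (add_zero 0)
  have h_neg : -g ≠ g := fun h ↦ hgg (add_eq_zero_iff_neg_eq.mpr h)
  ext i j
  by_cases hij : j = i
  · simp [stencil, conjTranspose_shiftMatrix, shiftMatrix_apply, hij, eq_sub_iff_add_eq, hg]
  · by_cases hpred : j = i - g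
    · simp [stencil, conjTranspose_shiftMatrix, shiftMatrix_apply, sub_eq_add_neg, hpred, hg, h_neg]
    · simp [stencil, conjTranspose_shiftMatrix, shiftMatrix_apply, hij, Ne.symm hij, hpred]

variable [Fintype G]

lemma conjTranspose_shiftMatrix_mul_self (g : G) : (shiftMatrix g)ᴴ * shiftMatrix g = 1 := by
  rw [shiftMatrix, conjTranspose_permMatrix, ← permMatrix_mul, mul_inv_cancel, permMatrix_one]

lemma conjTranspose_one_sub_shiftMatrix_mul_self (g : G) :
    (1 - shiftMatrix g)ᴴ * (1 - shiftMatrix g) =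
      (2 : ℂ) • 1 - shiftMatrix g - (shiftMatrix g)ᴴ := by
  rw [conjTranspose_sub, conjTranspose_one, mul_sub, sub_mul, sub_mul,
    conjTranspose_shiftMatrix_mul_self, mul_one, one_mul, mul_one]
  module

omit [Fintype G] in
lemma posSemidef_two_sub_shiftMatrix_sub_conjTranspose [Finite G] (g : G) :
    ((2 : ℂ) • 1 - shiftMatrix g - (shiftMatrix g)ᴴ).PosSemidef := by
  cases nonempty_fintype G
  exact conjTranspose_one_sub_shiftMatrix_mul_self g ▸ posSemidef_conjTranspose_mul_self _

/-- The stiffness matrix `M` for `α₁ = 1`, obtained by eliminating the positions: minus the product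
of the position-to-velocity block and the velocity-to-position block of the system matrix. -/
def stiffness (g : G) : Matrix G G ℂ :=
  -(stencil g 1 0 (-1) * stencil g (-1) 1 0)

/-- The damping matrix `K` for `α₃ = 1`: minus the velocity-to-velocity block of the system
matrix. -/
def damping (g : G) : Matrix G G ℂ :=
  -stencil g (-2) 1 1

lemma stiffness_of_eq_zero {g : G} (hg : g = 0) : stiffness g = 1 := by
  simp [stiffness, stencil_of_eq_zero hg]

lemma stiffness_of_add_self_eq_zero {g : G} (hg : g ≠ 0) (hgg : g + g = 0) :
    stiffness g = 1 - shiftMatrix g := by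
  simp [stiffness, stencil_of_add_self_eq_zero hg hgg, neg_add_eq_sub]

lemma stiffness_of_add_self_ne_zero {g : G} (hgg : g + g ≠ 0) :
    stiffness g = (2 : ℂ) • 1 - shiftMatrix g - (shiftMatrix g)ᴴ := by
  have h_mul := conjTranspose_shiftMatrix_mul_self g
  simp only [stiffness, stencil_of_add_self_ne_zero hgg, zero_smul, add_zero, one_smul, neg_smul,
    add_mul, neg_mul, mul_add, mul_neg, one_mul, mul_one, h_mul]
  module

lemma damping_of_add_self_eq_zero {g : G} (hgg : g + g = 0) : damping g = stiffness g + 1 := by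
  by_cases hg : g = 0
  · rw [damping, stiffness_of_eq_zero hg, stencil_of_eq_zero hg, neg_smul, neg_neg, two_smul]
  · rw [damping, stiffness_of_add_self_eq_zero hg hgg, stencil_of_add_self_eq_zero hg hgg]
    module

lemma damping_of_add_self_ne_zero {g : G} (hgg : g + g ≠ 0) : damping g = stiffness g := by
  rw [damping, stiffness_of_add_self_ne_zero hgg, stencil_of_add_self_ne_zero hgg]
  module

lemma posSemidef_stiffness (g : G) : (stiffness g).PosSemidef := by
  by_cases hgg : g + g = 0
  · by_cases hg : g = 0
    · exact stiffness_of_eq_zero hg ▸ PosSemidef.one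
    · have h_half : stiffness g = (2⁻¹ : ℂ) • ((2 : ℂ) • 1 - shiftMatrix g - (shiftMatrix g)ᴴ) := by
        rw [stiffness_of_add_self_eq_zero hg hgg, conjTranspose_shiftMatrix,
          neg_eq_of_add_eq_zero_left hgg]
        module
      exact h_half ▸ (posSemidef_two_sub_shiftMatrix_sub_conjTranspose g).smul (by positivity)
  · exact stiffness_of_add_self_ne_zero hgg ▸ posSemidef_two_sub_shiftMatrix_sub_conjTranspose g

lemma posSemidef_damping_sub_stiffness (g : G) : (damping g - stiffness g).PosSemidef := by
  by_cases hgg : g + g = 0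
  · simpa [damping_of_add_self_eq_zero hgg] using PosSemidef.one
  · simpa [damping_of_add_self_ne_zero hgg] using PosSemidef.zero

omit [Fintype G] in
lemma posSemidef_damping [Finite G] (g : G) : (damping g).PosSemidef := by
  cases nonempty_fintype G
  simpa using (posSemidef_damping_sub_stiffness g).add (posSemidef_stiffness g)

/-- The splitting of the coordinates of all satellites into positions (component `0`, the left
summand) and velocities (component `1`, the right summand), used to put the system matrix into
block form. -/
def positionVelocityEquiv (G : Type*) : G × Fin 2 ≃ G ⊕ G :=
  (Equiv.prodComm G (Fin 2)).trans
    ((finTwoEquiv.prodCongr (Equiv.refl G)).trans (Equiv.boolProdEquivSum G))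

theorem stmt_17_general (g : G) (α₁ α₃ : ℝ) (h₁ : 0 ≤ α₁) (h₃ : 0 < α₃)
    (B₀ Bm Bp : Matrix (Fin 2) (Fin 2) ℂ)
    (hB₀ : B₀ = !![0, -1; (α₁ : ℂ), -(2 * α₃ : ℂ)])
    (hBm : Bm = !![0, 1; 0, (α₃ : ℂ)])
    (hBp : Bp = !![0, 0; -(α₁ : ℂ), (α₃ : ℂ)])
    (B : Matrix (G × Fin 2) (G × Fin 2) ℂ)
    (hB : ∀ (i j : G) (a b : Fin 2),
      B (i, a) (j, b) =
        if j = i then B₀ a b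
        else if j = i - g then Bm a b
        else if j = i + g then Bp a b
        else 0) :
    ∀ lam ∈ spectrum ℂ B, lam.re ≤ 0 ∧ (lam ≠ 0 → lam.re < 0) := by
  intro lam hlam
  suffices h_neg : lam ≠ 0 → lam.re < 0 from
    ⟨(eq_or_ne lam 0).elim (fun h ↦ by simp [h]) fun h ↦ (h_neg h).le, h_neg⟩
  intro hlam0
  let e := positionVelocityEquiv G
  have h_blocks : reindexAlgEquiv ℂ ℂ e B = fromBlocks 0 (stencil g (-1) 1 0)
      (α₁ • stencil g 1 0 (-1)) (-(α₃ • damping g)) := by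
    ext (i | i) (j | j) <;>
      simp [e, positionVelocityEquiv, hB, hB₀, hBm, hBp, stencil, damping, finTwoEquiv,
        mul_comm]
  have h_stiffness : -(α₁ • stencil g 1 0 (-1) * stencil g (-1) 1 0) = α₁ • stiffness g := by
    rw [stiffness, smul_mul_assoc, smul_neg]
  rw [← AlgEquiv.spectrum_eq (reindexAlgEquiv ℂ ℂ e) B, h_blocks] at hlam
  refine re_neg_of_mem_spectrum_fromBlocks ((posSemidef_damping g).smul h₃.le)
    (h_stiffness ▸ (posSemidef_stiffness g).smul h₁) (fun x hx ↦ ?_) hlam0 hlam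
  rw [smul_mulVec, smul_eq_zero_iff_right h₃.ne'] at hx
  rw [h_stiffness, smul_mulVec, mulVec_eq_zero_of_posSemidef_sub (posSemidef_stiffness g)
    (posSemidef_damping_sub_stiffness g) hx, smul_zero]

end Ring

/-- Network-lifetime half of Proposition 2: the block-circulant system matrix of the
bilateral maneuver control has all eigenvalues with nonpositive real part, and all of
its nonzero eigenvalues have negative real part, for any `α₁ > 0`, `α₃ > 0` and any
ring size `n`. -/
theorem stmt_17 (n : ℕ) [NeZero n] (α₁ α₃ : ℝ) (h₁ : 0 < α₁) (h₃ : 0 < α₃)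
    (B₀ Bm Bp : Matrix (Fin 2) (Fin 2) ℂ)
    (hB₀ : B₀ = !![0, -1; (α₁ : ℂ), -(2 * α₃ : ℂ)])
    (hBm : Bm = !![0, 1; 0, (α₃ : ℂ)])
    (hBp : Bp = !![0, 0; -(α₁ : ℂ), (α₃ : ℂ)])
    (B : Matrix (ZMod n × Fin 2) (ZMod n × Fin 2) ℂ)
    (hB : ∀ (i j : ZMod n) (a b : Fin 2),
      B (i, a) (j, b) =
        if j = i then B₀ a b
        else if j = i - 1 then Bm a b
        else if j = i + 1 then Bp a b
        else 0) :
    ∀ lam ∈ spectrum ℂ B, lam.re ≤ 0 ∧ (lam ≠ 0 → lam.re < 0) :=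
  stmt_17_general 1 α₁ α₃ h₁.le h₃ B₀ Bm Bp hB₀ hBm hBp B hB
end
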